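/- arXiv:2011.02936 — 2 statements merged into one kernel-verified Lean document; each statement's English description precedes it below -/
import Mathlib

section
/- Let H be a Hilbert space and L̃ : [0,∞) → L(H) continuous with L̃(0) = 0, of class C¹ on (0,∞), and such that ‖s L̃'(s)‖ → 0 as s → 0⁺. Then the map N : H → H defined by N(x) = L̃(|x|) x is Fréchet C¹ on all of H with DN(0) = 0. -/
noncomputable section

/-!
Away from the origin the chain rule gives
`DN(x) y = L(|x|) y + D|·|(x)(y) • L'(|x|) x`. Since the norm is `1`-Lipschitz, the second term has
operator norm at most `‖|x| L'(|x|)‖`, which vanishes in the limit `x → 0`, so `DN(x) → L(0)`.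
At the origin `N(x) - L(0) x = (L(|x|) - L(0)) x = o(|x|)` gives `DN(0) = L(0)`.
-/

open Filter Set
open scoped Topology

theorem continuousAt_comp_norm_zero {E X : Type*} [SeminormedAddCommGroup E] [TopologicalSpace X]
    {f : ℝ → X} (hf : ContinuousWithinAt f (Ici 0) 0) : ContinuousAt (fun x : E ↦ f ‖x‖) 0 := by
  rw [← continuousWithinAt_univ]
  exact ContinuousWithinAt.comp (t := Ici 0) (by simpa using hf)
    continuous_norm.continuousWithinAt fun x _ ↦ norm_nonneg x

section

variable {E F : Type*} [NormedAddCommGroup E] [NormedSpace ℝ E]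
  [NormedAddCommGroup F] [NormedSpace ℝ F]

theorem hasFDerivAt_clm_apply_self_zero {A : E → E →L[ℝ] F} (hA : ContinuousAt A 0) :
    HasFDerivAt (fun x ↦ A x x) (A 0) 0 := by
  have hsmall : Tendsto (fun x ↦ ‖A x - A 0‖) (𝓝 0) (𝓝 0) :=
    tendsto_iff_norm_sub_tendsto_zero.1 hA
  refine .of_isLittleO (Asymptotics.isLittleO_iff.2 fun c hc ↦ ?_)
  filter_upwards [hsmall.eventually_le_const hc] with x hx
  simpa using (A x - A 0).le_of_opNorm_le hx x

theorem hasFDerivAt_apply_norm {L : ℝ → E →L[ℝ] F} {L' : E →L[ℝ] F} {x : E}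
    (hL : HasDerivAt L L' ‖x‖) (hx : DifferentiableAt ℝ (‖·‖) x) :
    HasFDerivAt (fun y ↦ L ‖y‖ y) (L ‖x‖ + (fderiv ℝ (‖·‖) x).smulRight (L' x)) x := by
  have hcomp : HasFDerivAt (fun y ↦ L ‖y‖) ((fderiv ℝ (‖·‖) x).smulRight L') x :=
    (hL.hasFDerivAt.comp x hx.hasFDerivAt).congr_fderiv (by ext; simp)
  refine (hcomp.clm_apply (hasFDerivAt_id x)).congr_fderiv ?_
  ext y
  simp

theorem norm_fderiv_norm_smulRight_apply_le (A : E →L[ℝ] F) (x : E) :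
    ‖(fderiv ℝ (‖·‖) x).smulRight (A x)‖ ≤ ‖‖x‖ • A‖ := by
  have hnorm : ‖fderiv ℝ (‖·‖) x‖ ≤ 1 := by
    simpa using norm_fderiv_le_of_lipschitz ℝ (lipschitzWith_one_norm (E := E)) (x₀ := x)
  calc ‖(fderiv ℝ (‖·‖) x).smulRight (A x)‖
      = ‖fderiv ℝ (‖·‖) x‖ * ‖A x‖ := ContinuousLinearMap.norm_smulRight_apply _ _
    _ ≤ 1 * (‖A‖ * ‖x‖) := by gcongr; exact A.le_opNorm x
    _ = ‖‖x‖ • A‖ := by rw [norm_smul, norm_norm, one_mul, mul_comm]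

theorem continuousAt_fderiv_apply_norm_zero {L : ℝ → E →L[ℝ] F}
    (hnorm : ∀ x : E, x ≠ 0 → DifferentiableAt ℝ (‖·‖) x)
    (hcont : ContinuousWithinAt L (Ici 0) 0) (hL : DifferentiableOn ℝ L (Ioi 0))
    (hder : Tendsto (fun s ↦ s • deriv L s) (𝓝[>] 0) (𝓝 0)) :
    ContinuousAt (fderiv ℝ fun x ↦ L ‖x‖ x) 0 := by
  have hcomp : ContinuousAt (fun x : E ↦ L ‖x‖) 0 := continuousAt_comp_norm_zero hcont
  have hzero : fderiv ℝ (fun x ↦ L ‖x‖ x) 0 = L ‖(0 : E)‖ :=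
    (hasFDerivAt_clm_apply_self_zero hcomp).fderiv
  have hformula : ∀ x : E, x ≠ 0 → fderiv ℝ (fun y ↦ L ‖y‖ y) x =
      L ‖x‖ + (fderiv ℝ (‖·‖) x).smulRight (deriv L ‖x‖ x) := fun x hx ↦
    (hasFDerivAt_apply_norm
      (hL.differentiableAt (Ioi_mem_nhds (norm_pos_iff.2 hx))).hasDerivAt (hnorm x hx)).fderiv
  have hradial : Tendsto (fun x : E ↦ (fderiv ℝ (‖·‖) x).smulRight (deriv L ‖x‖ x))
      (𝓝[≠] 0) (𝓝 0) :=
    squeeze_zero_norm (fun x ↦ norm_fderiv_norm_smulRight_apply_le _ x)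
      (tendsto_zero_iff_norm_tendsto_zero.1 (hder.comp tendsto_norm_nhdsNE_zero))
  have hsum := (hcomp.tendsto.mono_left nhdsWithin_le_nhds).add hradial
  rw [continuousAt_iff_punctured_nhds, hzero]
  rw [add_zero] at hsum
  refine hsum.congr' ?_
  filter_upwards [self_mem_nhdsWithin] with x hx
  exact (hformula x hx).symm

theorem contDiffAt_apply_norm {n : WithTop ℕ∞} {L : ℝ → E →L[ℝ] F} {x : E}
    (hL : ContDiffAt ℝ n L ‖x‖) (hx : ContDiffAt ℝ n (‖·‖) x) :
    ContDiffAt ℝ n (fun y ↦ L ‖y‖ y) x :=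
  (hL.comp x hx).clm_apply contDiffAt_id

theorem stmt12_general {L : ℝ → E →L[ℝ] F}
    (hnorm : ∀ x : E, x ≠ 0 → ContDiffAt ℝ 1 (‖·‖) x)
    (hcont : ContinuousWithinAt L (Ici 0) 0) (hC1 : ContDiffOn ℝ 1 L (Ioi 0))
    (hder : Tendsto (fun s ↦ s • deriv L s) (𝓝[>] 0) (𝓝 0)) :
    ContDiff ℝ 1 (fun x ↦ L ‖x‖ x) ∧ fderiv ℝ (fun x ↦ L ‖x‖ x) 0 = L 0 := by
  have hzero : HasFDerivAt (fun x ↦ L ‖x‖ x) (L ‖(0 : E)‖) 0 :=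
    hasFDerivAt_clm_apply_self_zero (continuousAt_comp_norm_zero hcont)
  have hne (x : E) (hx : x ≠ 0) : ContDiffAt ℝ 1 (fun y ↦ L ‖y‖ y) x :=
    contDiffAt_apply_norm (hC1.contDiffAt (Ioi_mem_nhds (norm_pos_iff.2 hx))) (hnorm x hx)
  refine ⟨contDiff_one_iff_fderiv.2 ⟨fun x ↦ ?_, continuous_iff_continuousAt.2 fun x ↦ ?_⟩,
    by simpa using hzero.fderiv⟩
  · rcases eq_or_ne x 0 with rfl | hx
    · exact hzero.differentiableAt
    · exact (hne x hx).differentiableAt one_ne_zero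
  · rcases eq_or_ne x 0 with rfl | hx
    · exact continuousAt_fderiv_apply_norm_zero
        (fun y hy ↦ (hnorm y hy).differentiableAt one_ne_zero) hcont
        (hC1.differentiableOn one_ne_zero) hder
    · exact (hne x hx).continuousAt_fderiv one_ne_zero

end

/-- if $L̃ : [0,∞) → L(H)$ is continuous with $L̃(0) = 0$, of class $C^1$
on $(0,∞)$, and $‖sL̃'(s)‖ → 0$ as $s → 0^+$, then $N(x) = L̃(|x|)x$ is Fréchet $C^1$ on
all of $H$ with $DN(0) = 0$. -/
theorem stmt12 {E : Type*} [NormedAddCommGroup E] [InnerProductSpace ℝ E] [CompleteSpace E]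
    (L : ℝ → E →L[ℝ] E)
    (hcont : ContinuousOn L (Set.Ici 0)) (h0 : L 0 = 0)
    (hC1 : ContDiffOn ℝ 1 L (Set.Ioi 0))
    (hder : Filter.Tendsto (fun s : ℝ => ‖s • deriv L s‖)
      (nhdsWithin 0 (Set.Ioi 0)) (nhds 0)) :
    ContDiff ℝ 1 (fun x : E => L ‖x‖ x) ∧ fderiv ℝ (fun x : E => L ‖x‖ x) 0 = 0 :=
  h0 ▸ stmt12_general (fun _ hx ↦ contDiffAt_norm ℝ hx) (hcont 0 self_mem_Ici) hC1
    (tendsto_zero_iff_norm_tendsto_zero.2 hder)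
end
end

section
/- (Main theorem) There exists a map F : ℓ² → ℓ² of class C¹ in the Fréchet sense with F(0) = 0, such that the spectrum of DF(0) intersects the open half-plane Re(z) > 0 (so the origin is linearly unstable), yet the origin is globally asymptotically stable in the sense of Lyapunov for the flow of x' = F(x); moreover F is globally Lipschitz, so this flow is globally defined for all t ∈ ℝ. -/
noncomputable section

/-- The Hilbert space ℓ². -/
abbrev H : Type := lp (fun _ : ℕ => ℂ) 2

/-!
Kakutani's weighted shift is a norm convergent sum of layers, `W = ∑ L k`, for which `-1 + W` has
the spectral value `1`, although removing any single layer `L k` leaves an operator that becomes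
small in an equivalent norm `‖D k x‖`, with `D k` diagonal. Accordingly,
`F x = -x + ∑ χ k x • L k x`, where `χ k` cuts off outside the ball of radius `r k`, has `-1 + W`
as its derivative at the origin, but outside the ball of radius `r k` its solutions decay
exponentially up to the equivalence constant `Q k` of the `k`-th norm. If `r k` is so small that
`Q (k + 1) * r k → 0`, a solution that has reached the radius `r k` never again exceeds
`sup_{j ≥ k} Q (j + 1) * r j`: look at the last of the radii that it has reached. This gives
stability, and attraction follows because every radius `r k` is reached.
-/

open Set Filter Topology Real
open scoped ENNReal NNReal lp

section IntegralCurves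
variable {E : Type*} [NormedAddCommGroup E] [NormedSpace ℝ E]

theorem exists_isIntegralCurveOn_of_lipschitzWith [CompleteSpace E] {F : E → E} {K : ℝ≥0}
    (hF : LipschitzWith K F) (y : E) :
    ∃ x : ℝ → E, x 0 = y ∧
      IsIntegralCurveOn x (fun _ ↦ F) (Icc (-((K : ℝ) + 1)⁻¹) ((K : ℝ) + 1)⁻¹) := by
  have hε : (0 : ℝ) < ((K : ℝ) + 1)⁻¹ := by positivity
  have picard : IsPicardLindelof (fun _ ↦ F) (tmin := -((K : ℝ) + 1)⁻¹) (tmax := ((K : ℝ) + 1)⁻¹)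
      ⟨0, by constructor <;> linarith⟩ y (‖F y‖₊ + 1) 0 ((K + 1) * (‖F y‖₊ + 1)) K := by
    refine ⟨fun _ _ ↦ hF.lipschitzOnWith, fun _ _ ↦ continuousOn_const, fun _ _ z hz ↦ ?_, ?_⟩
    · calc ‖F z‖ ≤ ‖F y‖ + ‖F z - F y‖ := norm_le_norm_add_norm_sub' _ _
        _ ≤ ‖F y‖ + K * (‖F y‖ + 1) := by
          grw [hF.norm_sub_le z y, mem_closedBall_iff_norm.1 hz]
          simp
        _ ≤ (K + 1) * (‖F y‖ + 1) := by linarith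
    · have hK : (K : ℝ) + 1 ≠ 0 := by positivity
      simp [mul_comm (K + 1 : ℝ), mul_inv_cancel_right₀ hK]
  exact picard.exists_eq_forall_mem_Icc_hasDerivWithinAt₀

open scoped Manifold in
theorem exists_isIntegralCurve_of_lipschitzWith [CompleteSpace E] {F : E → E} {K : ℝ≥0}
    (hF : ContDiff ℝ 1 F) (hK : LipschitzWith K F) (x₀ : E) :
    ∃ x : ℝ → E, x 0 = x₀ ∧ IsIntegralCurve x (fun _ ↦ F) := by
  have hε : (0 : ℝ) < ((K : ℝ) + 1)⁻¹ := by positivity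
  obtain ⟨x, hx₀, hx⟩ := exists_isMIntegralCurve_of_isMIntegralCurveOn (I := 𝓘(ℝ, E)) (v := F)
    (contMDiff_vectorSpace_iff_contDiff.2 hF) hε
    (fun y ↦ by
      obtain ⟨x, hx₀, hx⟩ := exists_isIntegralCurveOn_of_lipschitzWith hK y
      have hx' := hx.mono Ioo_subset_Icc_self
      exact ⟨x, hx₀, fun t ht ↦ (hx' t ht).hasFDerivWithinAt.hasMFDerivWithinAt⟩) x₀
  refine ⟨x, hx₀, fun t ↦ ?_⟩
  have hxt : HasFDerivAt x ((1 : ℝ →L[ℝ] ℝ).smulRight (F (x t))) t := (hx t).hasFDerivAt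
  simpa using hxt.hasDerivAt

theorem eq_zero_of_isIntegralCurve {F : E → E} {K : ℝ≥0} (hF : LipschitzWith K F) (hF₀ : F 0 = 0)
    {x : ℝ → E} (hx : IsIntegralCurve x (fun _ ↦ F)) {τ : ℝ} (hτ : x τ = 0) : x = 0 :=
  ODE_solution_unique_univ (v := fun _ ↦ F) (s := fun _ ↦ univ) (fun _ ↦ hF.lipschitzOnWith)
    (fun t ↦ ⟨hx t, trivial⟩)
    (fun t ↦ ⟨by simp [hF₀], trivial⟩) hτ
end IntegralCurves

section MultiscaleStability

variable {E : Type*} [NormedAddCommGroup E] [NormedSpace ℝ E]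

/-- Solutions of `x' = F x` decay at rate `c`, up to the constant factor `Q`, for as long as they
stay outside the open ball of radius `r`. -/
def DecaysOutside (F : E → E) (c r Q : ℝ) : Prop :=
  ∀ x : ℝ → E, IsIntegralCurve x (fun _ ↦ F) → ∀ s t, s ≤ t → (∀ τ ∈ Icc s t, r ≤ ‖x τ‖) →
    ‖x t‖ ≤ Q * exp (-c * (t - s)) * ‖x s‖

/-- Lyapunov stability of the origin for `x' = F x`. -/
def LyapunovStable (F : E → E) : Prop :=
  ∀ ε, 0 < ε → ∃ δ, 0 < δ ∧ ∀ x : ℝ → E, IsIntegralCurve x (fun _ ↦ F) → ‖x 0‖ < δ →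
    ∀ t, 0 ≤ t → ‖x t‖ < ε

/-- Every solution of `x' = F x` tends to the origin. -/
def GloballyAttracting (F : E → E) : Prop :=
  ∀ x : ℝ → E, IsIntegralCurve x (fun _ ↦ F) → Tendsto x atTop (𝓝 0)

/-- `x' = F x` decays at the common rate `c` outside each of the balls of radius `r k`, with
constants `Q k` that may blow up, but slowly compared to the preceding radii. A solution that
enters the ball of radius `r k` can then only leave it up to the small radius `Q (k + 1) * r k`. -/
structure DecayScales (F : E → E) (c : ℝ) (r Q : ℕ → ℝ) : Prop where
  rate_pos : 0 < c
  radius_pos (k : ℕ) : 0 < r k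
  one_le_const (k : ℕ) : 1 ≤ Q k
  tendsto_const_mul_radius : Tendsto (fun k ↦ Q (k + 1) * r k) atTop (𝓝 0)
  decaysOutside (k : ℕ) : DecaysOutside F c (r k) (Q k)

theorem exists_last_level {r : ℕ → ℝ} (hr : Tendsto r atTop (𝓝 0)) {φ : ℝ → ℝ}
    (hφ : Continuous φ) {s t : ℝ} (hst : s ≤ t) (hpos : ∀ τ ∈ Icc s t, 0 < φ τ) {K : ℕ}
    (hK : φ s ≤ r K) :
    ∃ k ≥ K, ∃ σ ∈ Icc s t, φ σ ≤ r k ∧ ∀ τ ∈ Icc σ t, r (k + 1) ≤ φ τ := by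
  classical
  obtain ⟨m, hm, hmin⟩ :=
    isCompact_Icc.exists_isMinOn (nonempty_Icc.2 hst) hφ.continuousOn
  obtain ⟨N, hN⟩ := eventually_atTop.1 (hr.eventually_lt_const (hpos m hm))
  let reached : ℕ → Prop := fun k ↦ ∃ σ ∈ Icc s t, φ σ ≤ r k
  have not_reached_of_ge : ∀ k ≥ N, ¬ reached k := fun k hk ⟨σ, hσ, hle⟩ ↦
    ((hN k hk).trans_le (hmin hσ)).not_ge hle
  have hKreached : reached K := ⟨s, left_mem_Icc.2 hst, hK⟩
  have hKN : K ≤ N := le_of_not_ge fun h ↦ not_reached_of_ge K h hKreached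
  obtain ⟨σ, hσ, hle⟩ : reached (Nat.findGreatest reached N) :=
    Nat.findGreatest_spec hKN hKreached
  refine ⟨Nat.findGreatest reached N, Nat.le_findGreatest hKN hKreached, σ, hσ, hle,
    fun τ hτ ↦ le_of_not_ge fun hlt ↦ ?_⟩
  have hnext : reached (Nat.findGreatest reached N + 1) := ⟨τ, ⟨hσ.1.trans hτ.1, hτ.2⟩, hlt⟩
  have hnextN : Nat.findGreatest reached N + 1 ≤ N :=
    le_of_not_ge fun h ↦ not_reached_of_ge _ h hnext
  exact Nat.not_succ_le_self _ (Nat.le_findGreatest hnextN hnext)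

theorem DecaysOutside.exists_norm_le {F : E → E} {c r Q : ℝ} (hF : DecaysOutside F c r Q)
    (hc : 0 < c) (hr : 0 < r) {x : ℝ → E} (hx : IsIntegralCurve x (fun _ ↦ F)) :
    ∃ t, ‖x t‖ ≤ r := by
  by_contra! hout
  have hbound : ∀ t, 0 ≤ t → r ≤ Q * exp (-c * t) * ‖x 0‖ := fun t ht ↦
    (hout t).le.trans (by simpa using hF x hx 0 t ht fun τ _ ↦ (hout τ).le)
  have hexp : Tendsto (fun t ↦ exp (-c * t)) atTop (𝓝 0) := by
    simpa only [neg_mul, Function.comp_def, id] using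
      tendsto_exp_neg_atTop_nhds_zero.comp (tendsto_id.const_mul_atTop hc)
  have hlim : Tendsto (fun t ↦ Q * exp (-c * t) * ‖x 0‖) atTop (𝓝 0) := by
    simpa using (hexp.const_mul Q).mul_const ‖x 0‖
  exact hr.not_ge (ge_of_tendsto hlim ((eventually_ge_atTop 0).mono hbound))

namespace DecayScales

variable {F : E → E} {c : ℝ} {r Q : ℕ → ℝ}

theorem tendsto_radius (h : DecayScales F c r Q) : Tendsto r atTop (𝓝 0) :=
  squeeze_zero (fun k ↦ (h.radius_pos k).le)
    (fun k ↦ le_mul_of_one_le_left (h.radius_pos k).le (h.one_le_const (k + 1)))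
    h.tendsto_const_mul_radius

theorem norm_le_of_norm_le_radius (h : DecayScales F c r Q) {C : ℝ≥0} (hF : LipschitzWith C F)
    (hF₀ : F 0 = 0) {x : ℝ → E} (hx : IsIntegralCurve x (fun _ ↦ F)) {ε : ℝ} {K : ℕ}
    (hK : ∀ k ≥ K, Q (k + 1) * r k ≤ ε) {s t : ℝ} (hst : s ≤ t) (hs : ‖x s‖ ≤ r K) :
    ‖x t‖ ≤ ε := by
  by_cases hzero : ∃ τ, x τ = 0
  · obtain ⟨τ, hτ⟩ := hzero
    have hQ := h.one_le_const (K + 1)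
    have hr := h.radius_pos K
    calc ‖x t‖ = 0 := by simp [eq_zero_of_isIntegralCurve hF hF₀ hx hτ]
      _ ≤ Q (K + 1) * r K := by positivity
      _ ≤ ε := hK K le_rfl
  push Not at hzero
  have hcont : Continuous x := continuous_iff_continuousAt.2 fun τ ↦ (hx τ).continuousAt
  obtain ⟨k, hKk, σ, hσ, hle, hout⟩ := exists_last_level h.tendsto_radius hcont.norm hst
    (fun τ _ ↦ norm_pos_iff.2 (hzero τ)) hs
  have hexp : exp (-c * (t - σ)) ≤ 1 :=
    exp_le_one_iff.2 (by nlinarith [h.rate_pos, hσ.2])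
  have hQ : 0 ≤ Q (k + 1) := zero_le_one.trans (h.one_le_const _)
  calc ‖x t‖ ≤ Q (k + 1) * exp (-c * (t - σ)) * ‖x σ‖ := h.decaysOutside (k + 1) x hx σ t hσ.2 hout
    _ ≤ Q (k + 1) * 1 * r k := by gcongr
    _ ≤ ε := by simpa using hK k hKk

theorem exists_radius_forall_norm_le (h : DecayScales F c r Q) {C : ℝ≥0} (hF : LipschitzWith C F)
    (hF₀ : F 0 = 0) {ε : ℝ} (hε : 0 < ε) :
    ∃ K, ∀ x : ℝ → E, IsIntegralCurve x (fun _ ↦ F) → ∀ s t, s ≤ t → ‖x s‖ ≤ r K → ‖x t‖ ≤ ε := by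
  obtain ⟨K, hK⟩ := eventually_atTop.1 (h.tendsto_const_mul_radius.eventually_le_const hε)
  exact ⟨K, fun x hx s t hst hs ↦ h.norm_le_of_norm_le_radius hF hF₀ hx hK hst hs⟩

theorem lyapunovStable (h : DecayScales F c r Q) {C : ℝ≥0} (hF : LipschitzWith C F)
    (hF₀ : F 0 = 0) : LyapunovStable F := by
  intro ε hε
  obtain ⟨K, hK⟩ := h.exists_radius_forall_norm_le hF hF₀ (half_pos hε)
  exact ⟨r K, h.radius_pos K, fun x hx hx₀ t ht ↦
    (hK x hx 0 t ht hx₀.le).trans_lt (half_lt_self hε)⟩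

theorem globallyAttracting (h : DecayScales F c r Q) {C : ℝ≥0} (hF : LipschitzWith C F)
    (hF₀ : F 0 = 0) : GloballyAttracting F := by
  intro x hx
  refine Metric.tendsto_atTop.2 fun ε hε ↦ ?_
  obtain ⟨K, hK⟩ := h.exists_radius_forall_norm_le hF hF₀ (half_pos hε)
  obtain ⟨s, hs⟩ := (h.decaysOutside K).exists_norm_le h.rate_pos (h.radius_pos K) hx
  refine ⟨s, fun t ht ↦ ?_⟩
  rw [dist_zero_right]
  exact (hK x hx s t ht hs).trans_lt (half_lt_self hε)

end DecayScales

/-- The radii that turn constants `Q k` into `DecayScales`, chosen so that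
`Q (k + 1) * decayRadius Q k = 1 / (k + 1)`. -/
def decayRadius (Q : ℕ → ℝ) (k : ℕ) : ℝ := 1 / ((k + 1) * Q (k + 1))

theorem decayRadius_pos {Q : ℕ → ℝ} (hQ : ∀ k, 1 ≤ Q k) (k : ℕ) : 0 < decayRadius Q k := by
  have := hQ (k + 1)
  unfold decayRadius
  positivity

theorem decayScales_decayRadius {F : E → E} {c : ℝ} {Q : ℕ → ℝ} (hc : 0 < c) (hQ : ∀ k, 1 ≤ Q k)
    (hF : ∀ k, DecaysOutside F c (decayRadius Q k) (Q k)) : DecayScales F c (decayRadius Q) Q where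
  rate_pos := hc
  radius_pos := decayRadius_pos hQ
  one_le_const := hQ
  tendsto_const_mul_radius := by
    refine tendsto_one_div_add_atTop_nhds_zero_nat.congr fun k ↦ ?_
    have : Q (k + 1) ≠ 0 := (zero_lt_one.trans_le (hQ _)).ne'
    unfold decayRadius
    field_simp
  decaysOutside := hF

end MultiscaleStability

theorem norm_le_exp_mul_norm_of_inner_deriv_le {E : Type*} [NormedAddCommGroup E]
    [InnerProductSpace ℝ E] {y y' : ℝ → E} {c s t : ℝ} (hst : s ≤ t)
    (hy : ∀ τ ∈ Icc s t, HasDerivAt y (y' τ) τ)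
    (hyy' : ∀ τ ∈ Icc s t, inner ℝ (y τ) (y' τ) ≤ -c * ‖y τ‖ ^ 2) :
    ‖y t‖ ≤ exp (-c * (t - s)) * ‖y s‖ := by
  have hderiv : ∀ τ ∈ Icc s t, HasDerivAt (‖y ·‖ ^ 2) (2 * inner ℝ (y τ) (y' τ)) τ :=
    fun τ hτ ↦ (hy τ hτ).norm_sq
  have gronwall : ‖y t‖ ^ 2 ≤ gronwallBound (‖y s‖ ^ 2) (-2 * c) 0 (t - s) :=
    le_gronwallBound_of_liminf_deriv_right_le (f := (‖y ·‖ ^ 2))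
      (fun τ hτ ↦ (hderiv τ hτ).continuousAt.continuousWithinAt)
      (fun τ hτ _ hr ↦
        (hderiv τ (Ico_subset_Icc_self hτ)).hasDerivWithinAt.liminf_right_slope_le hr) le_rfl
      (fun τ hτ ↦ by linarith [hyy' τ (Ico_subset_Icc_self hτ)]) t (right_mem_Icc.2 hst)
  refine (pow_le_pow_iff_left₀ (norm_nonneg _) (by positivity) two_ne_zero).1 ?_
  calc ‖y t‖ ^ 2 ≤ ‖y s‖ ^ 2 * exp (-2 * c * (t - s)) := by rwa [gronwallBound_ε0] at gronwall
    _ = (exp (-c * (t - s)) * ‖y s‖) ^ 2 := by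
      rw [mul_pow, ← exp_nat_mul, mul_comm]
      push_cast
      ring_nf

/-- A smooth profile on `[0, ∞)` that equals `1` at `0` and vanishes from `1` on. -/
def cutoff (u : ℝ) : ℝ := smoothTransition (1 - u)

theorem contDiff_cutoff : ContDiff ℝ 1 cutoff :=
  smoothTransition.contDiff.comp (contDiff_const.sub contDiff_id)

theorem cutoff_nonneg (u : ℝ) : 0 ≤ cutoff u := smoothTransition.nonneg _

theorem cutoff_le_one (u : ℝ) : cutoff u ≤ 1 := smoothTransition.le_one _

theorem cutoff_of_one_le {u : ℝ} (hu : 1 ≤ u) : cutoff u = 0 :=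
  smoothTransition.zero_of_nonpos (sub_nonpos.2 hu)

theorem cutoff_zero : cutoff 0 = 1 := smoothTransition.one_of_one_le (by simp)

theorem exists_abs_deriv_cutoff_mul_le : ∃ M, ∀ u, 0 ≤ u → |deriv cutoff u| * u ≤ M := by
  have hcont : Continuous fun u ↦ |deriv cutoff u| * u :=
    (contDiff_cutoff.continuous_deriv le_rfl).abs.mul continuous_id
  obtain ⟨M, hM⟩ := (isCompact_Icc (a := (0 : ℝ)) (b := 1)).bddAbove_image hcont.continuousOn
  have hbound : ∀ u ∈ Icc (0 : ℝ) 1, |deriv cutoff u| * u ≤ M := fun u hu ↦ hM ⟨u, hu, rfl⟩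
  refine ⟨M, fun u hu ↦ ?_⟩
  rcases le_or_gt u 1 with hu1 | hu1
  · exact hbound u ⟨hu, hu1⟩
  · have hlocal : cutoff =ᶠ[𝓝 u] fun _ ↦ 0 :=
      (lt_mem_nhds hu1).mono fun v hv ↦ cutoff_of_one_le hv.le
    simpa [hlocal.deriv_eq] using hbound 0 (by simp)

section RadialCutoff

variable {E G : Type*} [NormedAddCommGroup E] [InnerProductSpace ℝ E]
  [NormedAddCommGroup G] [NormedSpace ℝ G]

/-- The linear map `L` switched off outside the ball of radius `r`. The profile is evaluated at the
squared norm, which is smooth at the origin. -/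
def radialCutoff (r : ℝ) (L : E →L[ℝ] G) (x : E) : G := cutoff (‖x‖ ^ 2 / r ^ 2) • L x

theorem radialCutoff_zero (r : ℝ) (L : E →L[ℝ] G) : radialCutoff r L 0 = 0 := by
  simp [radialCutoff]

theorem radialCutoff_of_le {r : ℝ} (hr : 0 < r) (L : E →L[ℝ] G) {x : E} (hx : r ≤ ‖x‖) :
    radialCutoff r L x = 0 := by
  have : 1 ≤ ‖x‖ ^ 2 / r ^ 2 := (one_le_div₀ (by positivity)).2 (by gcongr)
  simp [radialCutoff, cutoff_of_one_le this]

theorem norm_radialCutoff_le (r : ℝ) (L : E →L[ℝ] G) (x : E) : ‖radialCutoff r L x‖ ≤ ‖L x‖ := by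
  rw [radialCutoff, norm_smul, norm_of_nonneg (cutoff_nonneg _)]
  exact mul_le_of_le_one_left (norm_nonneg _) (cutoff_le_one _)

theorem contDiff_radialCutoff (r : ℝ) (L : E →L[ℝ] G) : ContDiff ℝ 1 (radialCutoff r L) :=
  (contDiff_cutoff.comp ((contDiff_norm_sq ℝ).div_const _)).smul L.contDiff

theorem hasFDerivAt_radialCutoff (r : ℝ) (L : E →L[ℝ] G) (x : E) :
    HasFDerivAt (radialCutoff r L) (cutoff (‖x‖ ^ 2 / r ^ 2) • L +
      ((deriv cutoff (‖x‖ ^ 2 / r ^ 2) * (2 / r ^ 2)) • innerSL ℝ x).smulRight (L x)) x := by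
  have hcutoff : HasDerivAt cutoff _ (‖x‖ ^ 2 / r ^ 2) :=
    (contDiff_cutoff.differentiable one_ne_zero _).hasDerivAt
  have hnorm : HasFDerivAt (fun y : E ↦ ‖y‖ ^ 2 / r ^ 2) ((2 / r ^ 2) • innerSL ℝ x) x := by
    refine ((hasStrictFDerivAt_norm_sq x).hasFDerivAt.mul_const (r ^ 2)⁻¹).congr_fderiv ?_
    ext h
    simp
    ring
  exact ((hcutoff.comp_hasFDerivAt x hnorm).smul L.hasFDerivAt).congr_fderiv
    (by rw [smul_smul])

theorem fderiv_radialCutoff_zero (r : ℝ) (L : E →L[ℝ] G) :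
    fderiv ℝ (radialCutoff r L) 0 = L := by
  rw [(hasFDerivAt_radialCutoff r L 0).fderiv]
  ext h
  simp [cutoff_zero]

variable (E G) in
theorem exists_norm_fderiv_radialCutoff_le :
    ∃ C, ∀ (r : ℝ) (L : E →L[ℝ] G) (x : E), ‖fderiv ℝ (radialCutoff r L) x‖ ≤ C * ‖L‖ := by
  obtain ⟨M, hM⟩ := exists_abs_deriv_cutoff_mul_le
  refine ⟨1 + 2 * M, fun r L x ↦ ?_⟩
  rw [(hasFDerivAt_radialCutoff r L x).fderiv]
  set u := ‖x‖ ^ 2 / r ^ 2 with hu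
  have hfirst : ‖cutoff u • L‖ ≤ ‖L‖ := by
    rw [norm_smul, norm_of_nonneg (cutoff_nonneg _)]
    exact mul_le_of_le_one_left (norm_nonneg _) (cutoff_le_one _)
  have hsecond : ‖((deriv cutoff u * (2 / r ^ 2)) • innerSL ℝ x).smulRight (L x)‖ ≤
      2 * M * ‖L‖ := by
    calc _ = |deriv cutoff u| * (2 / r ^ 2) * ‖x‖ * ‖L x‖ := by
          rw [ContinuousLinearMap.norm_smulRight_apply, norm_smul, innerSL_apply_norm, norm_mul,
            norm_eq_abs, norm_of_nonneg (by positivity : 0 ≤ 2 / r ^ 2)]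
      _ ≤ |deriv cutoff u| * (2 / r ^ 2) * ‖x‖ * (‖L‖ * ‖x‖) := by
          gcongr
          exact L.le_opNorm x
      _ = 2 * (|deriv cutoff u| * u) * ‖L‖ := by rw [hu]; ring
      _ ≤ 2 * M * ‖L‖ := by
          gcongr
          exact hM u (by positivity)
  linarith [norm_add_le_of_le hfirst hsecond]

end RadialCutoff

section CutoffField

variable {ι E : Type*} [NormedAddCommGroup E] [InnerProductSpace ℝ E] {L : ι → E →L[ℝ] E}

/-- The vector field `-x + ∑ L k x` with the layer `L k` switched off outside the ball of radius
`r k`. -/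
def cutoffField (r : ι → ℝ) (L : ι → E →L[ℝ] E) (x : E) : E :=
  -x + ∑' k, radialCutoff (r k) (L k) x

theorem cutoffField_zero (r : ι → ℝ) (L : ι → E →L[ℝ] E) : cutoffField r L 0 = 0 := by
  simp [cutoffField, radialCutoff_zero]

theorem summable_radialCutoff [CompleteSpace E] (hL : Summable (‖L ·‖)) (r : ι → ℝ) (x : E) :
    Summable fun k ↦ radialCutoff (r k) (L k) x :=
  (hL.mul_right ‖x‖).of_norm_bounded fun k ↦
    (norm_radialCutoff_le _ _ _).trans ((L k).le_opNorm x)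

theorem hasFDerivAt_cutoffField [CompleteSpace E] (hL : Summable (‖L ·‖)) (r : ι → ℝ) (x : E) :
    HasFDerivAt (cutoffField r L)
      (-.id ℝ E + ∑' k, fderiv ℝ (radialCutoff (r k) (L k)) x) x := by
  obtain ⟨C, hC⟩ := exists_norm_fderiv_radialCutoff_le E E
  exact (hasFDerivAt_id x).neg.add <| hasFDerivAt_tsum (hL.mul_left C)
    (fun k y ↦ (contDiff_radialCutoff (r k) (L k)).differentiable one_ne_zero y |>.hasFDerivAt)
    (fun k y ↦ hC (r k) (L k) y) (summable_radialCutoff hL r 0) x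

theorem fderiv_cutoffField_zero [CompleteSpace E] (hL : Summable (‖L ·‖)) (r : ι → ℝ) :
    fderiv ℝ (cutoffField r L) 0 = -.id ℝ E + ∑' k, L k := by
  simp [(hasFDerivAt_cutoffField hL r 0).fderiv, fderiv_radialCutoff_zero]

theorem contDiff_cutoffField [CompleteSpace E] (hL : Summable (‖L ·‖)) (r : ι → ℝ) :
    ContDiff ℝ 1 (cutoffField r L) := by
  obtain ⟨C, hC⟩ := exists_norm_fderiv_radialCutoff_le E E
  refine contDiff_one_iff_hasFDerivAt.2 ⟨_, ?_, hasFDerivAt_cutoffField hL r⟩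
  exact continuous_const.add <| continuous_tsum
    (fun k ↦ (contDiff_radialCutoff (r k) (L k)).continuous_fderiv one_ne_zero)
    (hL.mul_left C) (fun k y ↦ hC (r k) (L k) y)

theorem exists_lipschitzWith_cutoffField [CompleteSpace E] (hL : Summable (‖L ·‖)) (r : ι → ℝ) :
    ∃ K, LipschitzWith K (cutoffField r L) := by
  obtain ⟨C, hC⟩ := exists_norm_fderiv_radialCutoff_le E E
  have hbound (x : E) : ‖fderiv ℝ (cutoffField r L) x‖ ≤ 1 + ∑' k, C * ‖L k‖ := by
    rw [(hasFDerivAt_cutoffField hL r x).fderiv]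
    refine norm_add_le_of_le ?_ (tsum_of_norm_bounded (hL.mul_left C).hasSum fun k ↦ hC _ _ _)
    simpa using ContinuousLinearMap.norm_id_le
  refine ⟨(1 + ∑' k, C * ‖L k‖).toNNReal, lipschitzWith_of_nnnorm_fderiv_le
    ((contDiff_cutoffField hL r).differentiable one_ne_zero) fun x ↦ ?_⟩
  exact NNReal.le_toNNReal_of_coe_le (hbound x)

/-- `‖T x‖` is an equivalent norm, with equivalence constant `Q`, in which every layer except
`L k` is smaller by the factor `δ`. -/
structure IsAdapted (L : ι → E →L[ℝ] E) (δ : ℝ) (k : ι) (T : E →L[ℝ] E) (Q : ℝ) : Prop where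
  norm_apply_le (x : E) : ‖T x‖ ≤ ‖x‖
  norm_le_mul_norm_apply (x : E) : ‖x‖ ≤ Q * ‖T x‖
  norm_apply_layer_le (j : ι) (hj : j ≠ k) (x : E) : ‖T (L j x)‖ ≤ δ * ‖L j‖ * ‖T x‖

namespace IsAdapted

variable {T : E →L[ℝ] E} {δ Q : ℝ} {k : ι} {r : ι → ℝ}

theorem norm_apply_radialCutoff_le (h : IsAdapted L δ k T Q) (hδ : 0 ≤ δ) (hr : 0 < r k) {x : E}
    (hx : r k ≤ ‖x‖) (j : ι) : ‖T (radialCutoff (r j) (L j) x)‖ ≤ δ * ‖L j‖ * ‖T x‖ := by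
  rcases eq_or_ne j k with rfl | hj
  · rw [radialCutoff_of_le hr _ hx, map_zero, norm_zero]
    positivity
  · calc ‖T (radialCutoff (r j) (L j) x)‖ = ‖radialCutoff (r j) (T ∘L L j) x‖ := by
          simp [radialCutoff]
      _ ≤ ‖T (L j x)‖ := norm_radialCutoff_le _ _ _
      _ ≤ δ * ‖L j‖ * ‖T x‖ := h.norm_apply_layer_le j hj x

variable [CompleteSpace E]

theorem inner_apply_cutoffField_le (h : IsAdapted L δ k T Q) (hL : Summable (‖L ·‖)) (hδ : 0 ≤ δ)
    (hr : 0 < r k) {x : E} (hx : r k ≤ ‖x‖) :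
    inner ℝ (T x) (T (cutoffField r L x)) ≤ -(1 - δ * ∑' j, ‖L j‖) * ‖T x‖ ^ 2 := by
  have hsum : ‖∑' j, T (radialCutoff (r j) (L j) x)‖ ≤ δ * (∑' j, ‖L j‖) * ‖T x‖ := by
    rw [← tsum_mul_left, ← tsum_mul_right]
    exact tsum_of_norm_bounded ((hL.mul_left δ).mul_right ‖T x‖).hasSum
      (h.norm_apply_radialCutoff_le hδ hr hx)
  calc inner ℝ (T x) (T (cutoffField r L x))
      = -‖T x‖ ^ 2 + inner ℝ (T x) (∑' j, T (radialCutoff (r j) (L j) x)) := by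
        rw [cutoffField, map_add, map_neg, T.map_tsum (summable_radialCutoff hL r x),
          inner_add_right, inner_neg_right, real_inner_self_eq_norm_sq]
    _ ≤ -‖T x‖ ^ 2 + ‖T x‖ * (δ * (∑' j, ‖L j‖) * ‖T x‖) := by
        grw [real_inner_le_norm, hsum]
    _ = -(1 - δ * ∑' j, ‖L j‖) * ‖T x‖ ^ 2 := by ring

theorem decaysOutside_cutoffField (h : IsAdapted L δ k T Q) (hL : Summable (‖L ·‖)) (hδ : 0 ≤ δ)
    (hQ : 0 ≤ Q) (hr : 0 < r k) :
    DecaysOutside (cutoffField r L) (1 - δ * ∑' j, ‖L j‖) (r k) Q := by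
  intro x hx s t hst hout
  have hdecay := norm_le_exp_mul_norm_of_inner_deriv_le hst
    (fun τ _ ↦ T.hasFDerivAt.comp_hasDerivAt τ (hx τ))
    (fun τ hτ ↦ h.inner_apply_cutoffField_le hL hδ hr (hout τ hτ))
  calc ‖x t‖ ≤ Q * ‖T (x t)‖ := h.norm_le_mul_norm_apply _
    _ ≤ Q * (exp (-(1 - δ * ∑' j, ‖L j‖) * (t - s)) * ‖T (x s)‖) := by gcongr; exact hdecay
    _ ≤ Q * (exp (-(1 - δ * ∑' j, ‖L j‖) * (t - s)) * ‖x s‖) := by gcongr; exact h.norm_apply_le _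
    _ = _ := by ring

end IsAdapted

theorem decayScales_cutoffField [CompleteSpace E] {L : ℕ → E →L[ℝ] E} {T : ℕ → E →L[ℝ] E} {δ : ℝ}
    {Q : ℕ → ℝ} (hL : Summable (‖L ·‖)) (hδ : 0 ≤ δ) (hδL : δ * ∑' j, ‖L j‖ < 1)
    (hQ : ∀ k, 1 ≤ Q k) (hT : ∀ k, IsAdapted L δ k (T k) (Q k)) :
    DecayScales (cutoffField (decayRadius Q) L) (1 - δ * ∑' j, ‖L j‖) (decayRadius Q) Q :=
  decayScales_decayRadius (sub_pos.2 hδL) hQ fun k ↦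
    (hT k).decaysOutside_cutoffField hL hδ (zero_le_one.trans (hQ k)) (decayRadius_pos hQ k)

end CutoffField

section WeightedShift

variable {𝕜 : Type*} {p : ℝ≥0∞} [NontriviallyNormedField 𝕜]

/-- Prepends `0` to a sequence. -/
def shiftSeq (x : ℕ → 𝕜) : ℕ → 𝕜
  | 0 => 0
  | n + 1 => x n

theorem hasSum_norm_shiftSeq (hp : 0 < p.toReal) (x : ℓ^p(ℕ, 𝕜)) :
    HasSum (fun n ↦ ‖shiftSeq x n‖ ^ p.toReal) (‖x‖ ^ p.toReal) := by
  rw [← hasSum_nat_add_iff' 1]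
  simpa [shiftSeq, zero_rpow hp.ne'] using lp.hasSum_norm hp x

variable [Fact (1 ≤ p)]

theorem norm_shiftSeq_le (x : ℓ^p(ℕ, 𝕜)) : ∀ n, ‖shiftSeq x n‖ ≤ ‖x‖
  | 0 => by simp [shiftSeq]
  | n + 1 => lp.norm_apply_le_norm (zero_lt_one.trans_le Fact.out).ne' x n

theorem memℓp_shiftSeq (x : ℓ^p(ℕ, 𝕜)) :
    Memℓp (E := fun _ : ℕ ↦ 𝕜) (shiftSeq x) p := by
  rcases p.dichotomy with rfl | hp
  · exact memℓp_infty ⟨‖x‖, forall_mem_range.2 (norm_shiftSeq_le x)⟩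
  · exact memℓp_gen (hasSum_norm_shiftSeq (zero_lt_one.trans_le hp) x).summable

/-- The unweighted right shift `(x₀, x₁, …) ↦ (0, x₀, x₁, …)` on `ℓᵖ`. -/
def rightShift : ℓ^p(ℕ, 𝕜) →L[𝕜] ℓ^p(ℕ, 𝕜) :=
  LinearMap.mkContinuous
    { toFun x := ⟨shiftSeq x, memℓp_shiftSeq x⟩
      map_add' x y := by
        ext (_ | n)
        exacts [(add_zero 0).symm, rfl]
      map_smul' c x := by ext (_ | n) <;> simp [shiftSeq] } 1 fun x ↦ by
    rw [one_mul]
    rcases p.dichotomy with rfl | hp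
    · exact lp.norm_le_of_forall_le (norm_nonneg x) (norm_shiftSeq_le x)
    · exact lp.norm_le_of_tsum_le (zero_lt_one.trans_le hp) (norm_nonneg x)
        (hasSum_norm_shiftSeq (zero_lt_one.trans_le hp) x).tsum_eq.le

/-- Coordinatewise multiplication by a bounded sequence on `ℓᵖ`. -/
def lpDiagonal (d : ℕ → 𝕜) {B : ℝ} (hd : ∀ n, ‖d n‖ ≤ B) :
    ℓ^p(ℕ, 𝕜) →L[𝕜] ℓ^p(ℕ, 𝕜) :=
  lp.mapCLM p (fun n ↦ ContinuousLinearMap.mul 𝕜 𝕜 (d n)) ((norm_nonneg _).trans (hd 0))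
    fun n ↦ (ContinuousLinearMap.opNorm_mul_apply_le 𝕜 𝕜 (d n)).trans (hd n)

/-- The weighted shift `(x₀, x₁, …) ↦ (0, w₀ x₀, w₁ x₁, …)` on `ℓᵖ`. -/
def weightedShift (w : ℕ → 𝕜) {B : ℝ} (hw : ∀ n, ‖w n‖ ≤ B) :
    ℓ^p(ℕ, 𝕜) →L[𝕜] ℓ^p(ℕ, 𝕜) :=
  rightShift ∘L lpDiagonal w hw

variable {d w : ℕ → 𝕜} {B B' : ℝ} (hd : ∀ n, ‖d n‖ ≤ B') (hw : ∀ n, ‖w n‖ ≤ B)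
  (x : ℓ^p(ℕ, 𝕜))

theorem lpDiagonal_apply (n : ℕ) : lpDiagonal d hd x n = d n * x n := rfl

theorem weightedShift_apply_zero : weightedShift w hw x 0 = 0 := rfl

theorem weightedShift_apply_succ (n : ℕ) : weightedShift w hw x (n + 1) = w n * x n := rfl

theorem norm_lpDiagonal_le : ‖(lpDiagonal d hd : ℓ^p(ℕ, 𝕜) →L[𝕜] _)‖ ≤ B' :=
  lp.norm_mapCLM_le ..

theorem norm_weightedShift_le : ‖(weightedShift w hw : ℓ^p(ℕ, 𝕜) →L[𝕜] _)‖ ≤ B := by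
  have hshift : ‖(rightShift : ℓ^p(ℕ, 𝕜) →L[𝕜] _)‖ ≤ 1 :=
    LinearMap.mkContinuous_norm_le _ zero_le_one _
  calc _ ≤ _ := ContinuousLinearMap.opNorm_comp_le _ _
    _ ≤ 1 * B := by gcongr; exact norm_lpDiagonal_le hw
    _ = B := one_mul B

theorem norm_le_mul_norm_lpDiagonal {Q : ℝ} (hd₀ : ∀ n, d n ≠ 0) (hQ : ∀ n, ‖(d n)⁻¹‖ ≤ Q) :
    ‖x‖ ≤ Q * ‖lpDiagonal d hd x‖ := by
  have hinv : lpDiagonal _ hQ (lpDiagonal d hd x) = x := by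
    ext n
    simp [lpDiagonal_apply, hd₀ n]
  conv_lhs => rw [← hinv]
  exact ContinuousLinearMap.le_of_opNorm_le _ (norm_lpDiagonal_le hQ) _

theorem lpDiagonal_weightedShift {c : 𝕜} (hdw : ∀ n, w n ≠ 0 → d (n + 1) = c * d n) :
    lpDiagonal d hd (weightedShift w hw x) = c • weightedShift w hw (lpDiagonal d hd x) := by
  ext (_ | n)
  · simp [lpDiagonal_apply, weightedShift_apply_zero]
  · by_cases hwn : w n = 0
    · simp [lpDiagonal_apply, weightedShift_apply_succ, hwn]
    · simp only [lpDiagonal_apply, weightedShift_apply_succ, hdw n hwn, lp.coeFn_smul,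
        Pi.smul_apply, smul_eq_mul]
      ring

theorem hasSum_weightedShift [CompleteSpace 𝕜] {ι : Type*} {u : ι → ℕ → 𝕜} {b : ι → ℝ}
    (hu : ∀ j n, ‖u j n‖ ≤ b j) (hb : Summable b) (huw : ∀ n, HasSum (u · n) (w n)) :
    HasSum (fun j ↦ (weightedShift (u j) (hu j) : ℓ^p(ℕ, 𝕜) →L[𝕜] _))
      (weightedShift w hw) := by
  have hsummable : Summable fun j ↦ (weightedShift (u j) (hu j) : ℓ^p(ℕ, 𝕜) →L[𝕜] _) :=
    hb.of_norm_bounded fun j ↦ norm_weightedShift_le (hu j)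
  refine hsummable.hasSum_iff.2 (ContinuousLinearMap.ext fun x ↦ lp.ext (funext fun n ↦ ?_))
  refine (hsummable.hasSum.mapL (lp.evalCLM 𝕜 (fun _ : ℕ ↦ 𝕜) p n ∘L .apply 𝕜 _ x)).unique ?_
  cases n with
  | zero => exact hasSum_zero
  | succ n => exact (huw n).mul_right (x n)

theorem tendsto_lp_apply_atTop_zero (hp : p ≠ ∞) : Tendsto (x ·) atTop (𝓝 0) := by
  have hp₀ : 0 < p.toReal := ENNReal.toReal_pos (zero_lt_one.trans_le Fact.out).ne' hp
  have hpow := (lp.hasSum_norm hp₀ x).summable.tendsto_atTop_zero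
  rw [tendsto_zero_iff_norm_tendsto_zero]
  simpa [← rpow_mul, hp₀.ne', inv_nonneg] using
    hpow.rpow_const (p := p.toReal⁻¹) (Or.inr (by positivity))

theorem mem_spectrum_weightedShift (hp : p ≠ ∞) {μ : 𝕜} (hμ : μ ≠ 0)
    (hprod : ∀ n, ‖μ‖ ^ n ≤ ‖∏ i ∈ Finset.range n, w i‖) :
    μ ∈ spectrum 𝕜 (weightedShift w hw : ℓ^p(ℕ, 𝕜) →L[𝕜] _) := by
  rintro ⟨resolvent, hresolvent⟩
  set x := (↑resolvent⁻¹ : ℓ^p(ℕ, 𝕜) →L[𝕜] ℓ^p(ℕ, 𝕜)) (lp.single p 0 1)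
  have hx : μ • x - weightedShift w hw x = lp.single p 0 1 := by
    calc μ • x - weightedShift w hw x
        = (resolvent * ↑resolvent⁻¹ : ℓ^p(ℕ, 𝕜) →L[𝕜] ℓ^p(ℕ, 𝕜)) (lp.single p 0 1) := by
          simp [hresolvent, x, Algebra.algebraMap_eq_smul_one]
      _ = _ := by simp
  have hxn (n : ℕ) : μ * x n - weightedShift w hw x n = (lp.single p 0 1 : ℓ^p(ℕ, 𝕜)) n :=
    congr($hx n)
  have hcoord (n : ℕ) : μ ^ (n + 1) * x n = ∏ i ∈ Finset.range n, w i := by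
    induction n with
    | zero => simpa [weightedShift_apply_zero] using hxn 0
    | succ n ih =>
      have hn : μ * x (n + 1) = w n * x n := by
        simpa [weightedShift_apply_succ, sub_eq_zero] using hxn (n + 1)
      rw [Finset.prod_range_succ, ← ih]
      linear_combination μ ^ (n + 1) * hn
  have hlarge (n : ℕ) : ‖μ‖⁻¹ ≤ ‖x n‖ := by
    rw [inv_le_iff_one_le_mul₀ (norm_pos_iff.2 hμ)]
    have := hprod n
    rw [← hcoord n, norm_mul, norm_pow, pow_succ, mul_assoc] at this
    rwa [le_mul_iff_one_le_right (by positivity), mul_comm] at this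
  exact (inv_pos.2 (norm_pos_iff.2 hμ)).not_ge <|
    ge_of_tendsto' (tendsto_zero_iff_norm_tendsto_zero.1 (tendsto_lp_apply_atTop_zero x hp)) hlarge

end WeightedShift

section KakutaniShift

theorem padicValNat_two_eq_of_dvd_add {k m : ℕ} (hm : m ≠ 0) (hdvd : 2 ^ (k + 1) ∣ m + 2 ^ k) :
    padicValNat 2 m = k := by
  have hpow : 2 ^ k ∣ m := (Nat.dvd_add_left dvd_rfl).1 ((pow_dvd_pow 2 k.le_succ).trans hdvd)
  have hpow_succ : ¬ 2 ^ (k + 1) ∣ m := fun h ↦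
    Nat.not_succ_le_self k <|
      (Nat.pow_dvd_pow_iff_le_right one_lt_two).1 ((Nat.dvd_add_right h).1 hdvd)
  rw [padicValNat_dvd_iff_le hm] at hpow hpow_succ
  lia

theorem succ_mod_of_not_dvd {a m : ℕ} (h : ¬ m ∣ a + 1) : (a + 1) % m = a % m + 1 := by
  have hdiv := Nat.div_add_mod (a + 1) m
  rw [Nat.succ_div_of_not_dvd h] at hdiv
  linarith [Nat.div_add_mod a m]

theorem prod_pow_padicValNat_succ {M : Type*} [CommMonoid M] (q : ℕ) [Fact q.Prime] (a : M)
    (n : ℕ) : ∏ i ∈ Finset.range n, a ^ padicValNat q (i + 1) = a ^ padicValNat q n.factorial := by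
  induction n with
  | zero => simp
  | succ n ih =>
    rw [Finset.prod_range_succ, ih, ← pow_add, Nat.factorial_succ,
      padicValNat.mul n.succ_ne_zero n.factorial_ne_zero, add_comm]

theorem padicValNat_two_factorial_le (n : ℕ) : padicValNat 2 n.factorial ≤ n := by
  have := sub_one_mul_padicValNat_factorial (p := 2) n
  lia

/-- Kakutani's weights: `4, 2, 4, 1, 4, 2, 4, 1/2, …`, read off the 2-adic valuation of `n + 1`. -/
def kakutaniWeight (n : ℕ) : ℂ := 4 * (1 / 2) ^ padicValNat 2 (n + 1)

/-- The part of Kakutani's weights supported where the 2-adic valuation of `n + 1` is `j`. -/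
def kakutaniLayerWeight (j n : ℕ) : ℂ := if j = padicValNat 2 (n + 1) then kakutaniWeight n else 0

theorem norm_kakutaniWeight_le (n : ℕ) : ‖kakutaniWeight n‖ ≤ 4 := by
  simpa [kakutaniWeight] using inv_le_one_of_one_le₀ (one_le_pow₀ one_le_two)

theorem norm_kakutaniLayerWeight_le (j n : ℕ) : ‖kakutaniLayerWeight j n‖ ≤ 4 * (1 / 2) ^ j := by
  unfold kakutaniLayerWeight
  split_ifs with hj
  · simp [kakutaniWeight, hj]
  · simp

theorem two_pow_le_norm_prod_kakutaniWeight (n : ℕ) :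
    ‖(2 : ℂ)‖ ^ n ≤ ‖∏ i ∈ Finset.range n, kakutaniWeight i‖ := by
  simp only [kakutaniWeight, Finset.prod_mul_distrib, prod_pow_padicValNat_succ]
  calc ‖(2 : ℂ)‖ ^ n = 4 ^ n * (1 / 2) ^ n := by rw [← mul_pow]; norm_num
    _ ≤ 4 ^ n * (1 / 2) ^ padicValNat 2 n.factorial := by
      gcongr ?_ * ?_
      exact pow_le_pow_of_le_one (by norm_num) (by norm_num) (padicValNat_two_factorial_le n)
    _ = _ := by simp

/-- Kakutani's weighted shift, normalized to have spectral radius at least `2`. -/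
def kakutaniShift : H →L[ℂ] H := weightedShift kakutaniWeight norm_kakutaniWeight_le

/-- The `j`-th layer of Kakutani's weighted shift. -/
def kakutaniLayer (j : ℕ) : H →L[ℂ] H :=
  weightedShift (kakutaniLayerWeight j) (norm_kakutaniLayerWeight_le j)

theorem hasSum_four_mul_geometric_two : HasSum (fun j : ℕ ↦ (4 : ℝ) * (1 / 2) ^ j) 8 := by
  rw [show (8 : ℝ) = 4 * 2 by norm_num]
  exact hasSum_geometric_two.mul_left 4

theorem hasSum_kakutaniLayer : HasSum kakutaniLayer kakutaniShift :=
  hasSum_weightedShift norm_kakutaniWeight_le norm_kakutaniLayerWeight_le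
    hasSum_four_mul_geometric_two.summable fun _ ↦ hasSum_ite_eq _ _

theorem hasSum_kakutaniLayer_restrictScalars :
    HasSum (fun j ↦ (kakutaniLayer j).restrictScalars ℝ) (kakutaniShift.restrictScalars ℝ) :=
  hasSum_kakutaniLayer.map (ContinuousLinearMap.restrictScalarsL ℂ H H ℝ ℝ)
    (ContinuousLinearMap.restrictScalarsL ℂ H H ℝ ℝ).continuous

theorem norm_kakutaniLayer_le (j : ℕ) : ‖kakutaniLayer j‖ ≤ 4 * (1 / 2) ^ j :=
  norm_weightedShift_le _

theorem summable_norm_kakutaniLayer : Summable (‖kakutaniLayer ·‖) :=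
  hasSum_four_mul_geometric_two.summable.of_nonneg_of_le (fun _ ↦ norm_nonneg _)
    norm_kakutaniLayer_le

theorem tsum_norm_kakutaniLayer_le : ∑' j, ‖kakutaniLayer j‖ ≤ 8 :=
  hasSum_le norm_kakutaniLayer_le summable_norm_kakutaniLayer.hasSum hasSum_four_mul_geometric_two

theorem one_mem_spectrum_neg_one_add_kakutaniShift :
    1 ∈ spectrum ℂ (-1 + kakutaniShift) := by
  have two_mem : 1 + 1 ∈ spectrum ℂ kakutaniShift := by
    rw [one_add_one_eq_two]
    exact mem_spectrum_weightedShift _ ENNReal.ofNat_ne_top two_ne_zero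
      two_pow_le_norm_prod_kakutaniWeight
  simpa using spectrum.add_mem_iff.1 two_mem

/-- Powers of `1 / 16` whose exponent increases by one from `n` to `n + 1`, except that it drops to
`0` where the 2-adic valuation of `n + 1` is `k`. -/
def rescalingWeight (k n : ℕ) : ℂ := (1 / 16) ^ ((n + 2 ^ k) % 2 ^ (k + 1))

theorem rescalingWeight_ne_zero (k n : ℕ) : rescalingWeight k n ≠ 0 := by
  simp [rescalingWeight]

theorem norm_rescalingWeight_le (k n : ℕ) : ‖rescalingWeight k n‖ ≤ 1 := by
  simpa [rescalingWeight] using inv_le_one_of_one_le₀ (one_le_pow₀ (by norm_num))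

theorem norm_inv_rescalingWeight_le (k n : ℕ) :
    ‖(rescalingWeight k n)⁻¹‖ ≤ 16 ^ 2 ^ (k + 1) := by
  simpa [rescalingWeight] using
    pow_le_pow_right₀ (by norm_num) (Nat.mod_lt _ (by positivity)).le

theorem rescalingWeight_succ {k n : ℕ} (h : padicValNat 2 (n + 1) ≠ k) :
    rescalingWeight k (n + 1) = 1 / 16 * rescalingWeight k n := by
  have hdvd : ¬ 2 ^ (k + 1) ∣ n + 2 ^ k + 1 := fun hdvd ↦
    h (padicValNat_two_eq_of_dvd_add n.succ_ne_zero (by rwa [add_right_comm]))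
  rw [rescalingWeight, add_right_comm, succ_mod_of_not_dvd hdvd, pow_succ', rescalingWeight]

/-- The diagonal operator `D` for which `‖D x‖` is the norm adapted to switching off the `k`-th
layer: `D L D⁻¹ = L / 16` for each other layer `L`. Any factor below `1 / 8` would do in place of
`1 / 16`, as the norms of the layers add up to at most `8`. -/
def rescaling (k : ℕ) : H →L[ℂ] H := lpDiagonal (rescalingWeight k) (norm_rescalingWeight_le k)

theorem rescaling_kakutaniLayer {j k : ℕ} (hjk : j ≠ k) (x : H) :
    rescaling k (kakutaniLayer j x) = (1 / 16 : ℂ) • kakutaniLayer j (rescaling k x) :=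
  lpDiagonal_weightedShift _ _ _ fun n hn ↦ rescalingWeight_succ fun hk ↦ hn <| by
    simp [kakutaniLayerWeight, hk, hjk]

theorem isAdapted_rescaling (k : ℕ) :
    IsAdapted (fun j ↦ (kakutaniLayer j).restrictScalars ℝ) (1 / 16) k
      ((rescaling k).restrictScalars ℝ) (16 ^ 2 ^ (k + 1)) where
  norm_apply_le x := by
    simpa using (rescaling k).le_of_opNorm_le (norm_lpDiagonal_le _) x
  norm_le_mul_norm_apply x :=
    norm_le_mul_norm_lpDiagonal (norm_rescalingWeight_le k) x (rescalingWeight_ne_zero k)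
      (norm_inv_rescalingWeight_le k)
  norm_apply_layer_le j hjk x := by
    simp only [ContinuousLinearMap.coe_restrictScalars', rescaling_kakutaniLayer hjk, norm_smul,
      ContinuousLinearMap.norm_restrictScalars, mul_assoc]
    gcongr
    · norm_num
    · exact (kakutaniLayer j).le_opNorm _

end KakutaniShift

/-- Main theorem: there is a Fréchet-$C^1$ map $F : ℓ² → ℓ²$ with
$F(0) = 0$ whose linearization $DF(0)$ has spectrum meeting the half-plane
$\mathrm{Re}(z) > 0$, yet the origin is globally asymptotically stable in the sense of
Lyapunov for the flow of $x' = F(x)$; moreover $F$ is globally Lipschitz, so the flow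
is globally defined for all $t ∈ ℝ$. -/
theorem stmt18 :
    ∃ F : H → H, F 0 = 0 ∧ ContDiff ℝ 1 F ∧
      (∃ C : NNReal, LipschitzWith C F) ∧
      (∃ A : H →L[ℂ] H, fderiv ℝ F 0 = A.restrictScalars ℝ ∧
        ∃ z ∈ spectrum ℂ A, 0 < z.re) ∧
      (∀ x₀ : H, ∃ x : ℝ → H, x 0 = x₀ ∧ ∀ t : ℝ, HasDerivAt x (F (x t)) t) ∧
      (∀ ε : ℝ, 0 < ε → ∃ δ : ℝ, 0 < δ ∧
        ∀ x : ℝ → H, (∀ t : ℝ, HasDerivAt x (F (x t)) t) → ‖x 0‖ < δ →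
          ∀ t : ℝ, 0 ≤ t → ‖x t‖ < ε) ∧
      (∀ x : ℝ → H, (∀ t : ℝ, HasDerivAt x (F (x t)) t) →
        Filter.Tendsto x Filter.atTop (nhds 0)) := by
  let Q : ℕ → ℝ := fun k ↦ 16 ^ 2 ^ (k + 1)
  let L : ℕ → H →L[ℝ] H := fun j ↦ (kakutaniLayer j).restrictScalars ℝ
  let F : H → H := cutoffField (decayRadius Q) L
  have hL : Summable (‖L ·‖) := summable_norm_kakutaniLayer
  have hF₀ : F 0 = 0 := cutoffField_zero _ _
  have hF : ContDiff ℝ 1 F := contDiff_cutoffField hL _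
  obtain ⟨K, hK⟩ : ∃ K, LipschitzWith K F := exists_lipschitzWith_cutoffField hL _
  have hdF : fderiv ℝ F 0 = (-1 + kakutaniShift).restrictScalars ℝ := by
    rw [fderiv_cutoffField_zero hL, hasSum_kakutaniLayer_restrictScalars.tsum_eq]
    rfl
  have hscales : DecayScales F _ (decayRadius Q) Q :=
    decayScales_cutoffField hL (by norm_num)
      (by linarith [tsum_norm_kakutaniLayer_le] : 1 / 16 * ∑' j, ‖kakutaniLayer j‖ < 1)
      (fun k ↦ one_le_pow₀ (by norm_num)) isAdapted_rescaling
  exact ⟨F, hF₀, hF, ⟨K, hK⟩, ⟨_, hdF, 1, one_mem_spectrum_neg_one_add_kakutaniShift, one_pos⟩,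
    exists_isIntegralCurve_of_lipschitzWith hF hK, hscales.lyapunovStable hK hF₀,
    hscales.globallyAttracting hK hF₀⟩
end
end
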